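/- For every integer k ≥ 0, the Omninomination social choice correspondence is not k-augmentation strategyproof: there exist a profile, a voter i, a manipulation ≻'_i, and a tie-breaker τ such that Omni_τ(≻'_i, ≻_{−i}) ≻_i Omni_τ(≻ + k(≻_i)). Consequently the manipulation potential of the Omninomination rule is ∞. -/

import Mathlib

open Finset

/-- A strict linear preference order over `m` candidates, encoded as the permutation sending
each candidate to its rank; rank `0` is the most preferred position, so
`c ≻ c'` iff `p c < p c'`. -/
abbrev Pref (m : ℕ) := Equiv.Perm (Fin m)

/-- A profile of `N` voters, each with a strict preference over `m` candidates. -/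
abbrev Profile (m N : ℕ) := Fin N → Pref m

/-- A social choice correspondence: for each number `N` of voters, it maps each `N`-voter
profile to a set of (tied) winners. -/
abbrev SCC (m : ℕ) := (N : ℕ) → Profile m N → Finset (Fin m)

/-- The profile `P` with `k` extra copies of voter `i`'s preference appended. -/
def addCopies {m n : ℕ} (P : Profile m n) (i : Fin n) (k : ℕ) : Profile m (n + k) :=
  fun j => if h : (j : ℕ) < n then P ⟨j, h⟩ else P i

/-- Break a tie among the candidates in `A` using the linear tie-breaking order `τ`:
the winner is the `τ`-maximal (lowest `τ`-rank) element of `A`. -/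
noncomputable def tiebreak {m : ℕ} [NeZero m] (τ : Pref m) (A : Finset (Fin m)) : Fin m :=
  if h : A.Nonempty then τ.symm ((A.image (fun c => τ c)).min' (h.image _)) else 0

/-- `F` is `k`-augmentation strategyproof on `n`-voter profiles: for every tie-breaker `τ`,
profile `P`, voter `i`, and alternative preference `q`, voter `i` weakly prefers the outcome
obtained by adding `k` truthful copies of her vote to the outcome of the manipulation `q`. -/
def kASP (m n : ℕ) [NeZero m] (F : SCC m) (k : ℕ) : Prop :=
  ∀ (τ : Pref m) (P : Profile m n) (i : Fin n) (q : Pref m),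
    (P i) (tiebreak τ (F (n + k) (addCopies P i k))) ≤
      (P i) (tiebreak τ (F n (Function.update P i q)))

/-- The manipulation potential of `F` on `n`-voter profiles: the least `k` such that `F` is
`k'`-augmentation strategyproof for all `k' ≥ k`, and `⊤` (i.e. `∞`) if no such `k` exists. -/
noncomputable def manipPot (m n : ℕ) [NeZero m] (F : SCC m) : ℕ∞ :=
  sInf ((fun k : ℕ => (k : ℕ∞)) '' {k : ℕ | ∀ k' : ℕ, k ≤ k' → kASP m n F k'})

/-- Omninomination: all candidates ranked first by at least one voter. -/
def omniRule (m : ℕ) [NeZero m] : SCC m := fun _ P =>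
  Finset.univ.filter (fun c => ∃ i, P i c = 0)

theorem tiebreak_eq_of {m : ℕ} [NeZero m] (τ : Pref m) (A : Finset (Fin m)) (c : Fin m)
    (hc : c ∈ A) (h : ∀ d ∈ A, τ c ≤ τ d) : tiebreak τ A = c := by
  unfold tiebreak
  rw [dif_pos ⟨c, hc⟩, Equiv.symm_apply_eq]
  apply le_antisymm
  · exact Finset.min'_le _ _ (Finset.mem_image_of_mem _ hc)
  · apply Finset.le_min'
    intro y hy
    obtain ⟨d, hd, rfl⟩ := Finset.mem_image.1 hy
    exact h d hd

theorem omni_not_kASP (m n : ℕ) [NeZero m] (hm : 3 ≤ m) (hn : 2 ≤ n) (k : ℕ) :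
    ¬ kASP m n (omniRule m) k := by
  intro H
  obtain ⟨a, ha⟩ : ∃ a : Fin m, a = ⟨1, by omega⟩ := ⟨_, rfl⟩
  obtain ⟨b, hb⟩ : ∃ b : Fin m, b = ⟨2, by omega⟩ := ⟨_, rfl⟩
  have z0 : ((0 : Fin m) : ℕ) = 0 := rfl
  have a1 : (a : ℕ) = 1 := by rw [ha]
  have b2 : (b : ℕ) = 2 := by rw [hb]
  have ha0 : a ≠ 0 := by intro h; rw [h] at a1; omega
  have hb0 : b ≠ 0 := by intro h; rw [h] at b2; omega
  have hab : a ≠ b := by intro h; rw [h] at a1; omega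
  obtain ⟨τ, hτ⟩ : ∃ τ : Pref m, τ = Equiv.swap 0 a * Equiv.swap 0 b := ⟨_, rfl⟩
  have t0 : τ 0 = b := by
    rw [hτ, Equiv.Perm.mul_apply, Equiv.swap_apply_left,
      Equiv.swap_apply_of_ne_of_ne hb0 hab.symm]
  have tb : τ b = a := by
    rw [hτ, Equiv.Perm.mul_apply, Equiv.swap_apply_right, Equiv.swap_apply_left]
  have ta : τ a = 0 := by
    rw [hτ, Equiv.Perm.mul_apply, Equiv.swap_apply_of_ne_of_ne ha0 hab,
      Equiv.swap_apply_right]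
  have sw : ∀ x c : Fin m, Equiv.swap 0 x c = 0 → c = x := by
    intro x c h
    rw [Equiv.swap_apply_eq_iff, Equiv.swap_apply_left] at h
    exact h
  let i : Fin n := ⟨0, by omega⟩
  let j : Fin n := ⟨1, by omega⟩
  have hji : j ≠ i := by simp [i, j]
  let P : Profile m n := fun l => if l = i then 1 else Equiv.swap 0 b
  have Pi : P i = 1 := if_pos rfl
  have Pne : ∀ l, l ≠ i → P l = Equiv.swap 0 b := fun l h => if_neg h
  have h := H τ P i (Equiv.swap 0 a)
  have e1 : tiebreak τ (omniRule m (n + k) (addCopies P i k)) = b := by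
    apply tiebreak_eq_of
    · refine Finset.mem_filter.2 ⟨Finset.mem_univ _, ⟨1, by omega⟩, ?_⟩
      have : addCopies P i k ⟨1, by omega⟩ = P j := dif_pos (show 1 < n by omega)
      rw [this, Pne j hji, Equiv.swap_apply_right]
    · intro d hd
      obtain ⟨-, l, hl⟩ := Finset.mem_filter.1 hd
      have key : ∀ l, P l d = 0 → τ b ≤ τ d := by
        intro l hl
        by_cases hli : l = i
        · rw [hli, Pi, Equiv.Perm.one_apply] at hl
          rw [hl, t0, tb, Fin.le_def]; omega
        · rw [Pne l hli] at hl
          rw [sw _ _ hl]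
      unfold addCopies at hl
      split_ifs at hl
      · exact key _ hl
      · exact key _ hl
  have e2 : tiebreak τ (omniRule m n (Function.update P i (Equiv.swap 0 a))) = a := by
    apply tiebreak_eq_of
    · refine Finset.mem_filter.2 ⟨Finset.mem_univ _, i, ?_⟩
      rw [Function.update_self, Equiv.swap_apply_right]
    · intro d _
      rw [ta, Fin.le_def]; omega
  rw [e1, e2, Pi, Equiv.Perm.one_apply, Equiv.Perm.one_apply, Fin.le_def] at h
  omega

/-- For every `k ≥ 0`, the Omninomination rule is not `k`-augmentation
strategyproof; consequently its manipulation potential is `∞`. -/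
theorem omni_manipPot_infinite (m n : ℕ) [NeZero m] (hm : 3 ≤ m) (hn : 2 ≤ n) :
    (∀ k : ℕ, ¬ kASP m n (omniRule m) k) ∧ manipPot m n (omniRule m) = ⊤ := by
  refine ⟨omni_not_kASP m n hm hn, ?_⟩
  have : {k : ℕ | ∀ k' : ℕ, k ≤ k' → kASP m n (omniRule m) k'} = ∅ := by
    ext k
    simp only [Set.mem_setOf_eq, Set.mem_empty_iff_false, iff_false]
    intro h
    exact omni_not_kASP m n hm hn k (h k le_rfl)
  unfold manipPot
  rw [this, Set.image_empty, sInf_empty]
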